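/- arXiv:1205.0308 — 3 statements merged into one kernel-verified Lean document; each statement's English description precedes it below -/
import Mathlib

section
/- Let n ≥ 1, let Φ be an automorphism of the free group F_n, let B = F_n ⋊_Φ ℤ, let F₂ be the free group on generators u, v, and let h_Q : B × F₂ → ℤ be the homomorphism given by h_Q((w,k), g) = k + σ(g), where σ(u) = σ(v) = 1. Then the kernel of h_Q is isomorphic as a group to the semidirect product F_n ⋊_ψ F₂, where ψ : F₂ → Aut(F_n) sends both free generators u and v to Φ. -/
/-!
An element `((w, k), g)` lies in the kernel of `h_Q` exactly when `k = -σ(g)`, so it is determined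
by `(w, g)`, and the multiplication makes `g` act on `F_n` by `Φ ^ (-σ(g))`. The automorphism `ι` of
`F₂` inverting both generators negates `σ`, and `ψ = Φ ^ σ`, so
`((w, k), g) ↦ (w, ι g)` is an isomorphism onto `F_n ⋊_ψ F₂`, with inverse
`(w, g) ↦ ((w, σ(g)), ι g)`.
-/

/-- `Fn n` is the free group on `n` generators. -/
abbrev Fn (n : ℕ) := FreeGroup (Fin n)

/-- `F2` is the free group on two generators `u = FreeGroup.of 0` and `v = FreeGroup.of 1`. -/
abbrev F2 := FreeGroup (Fin 2)

/-- `Bgrp n Φ = F_n ⋊_Φ ℤ`, the semidirect product in which `k : ℤ` acts by `Φ ^ k`. -/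
abbrev Bgrp (n : ℕ) (Φ : MulAut (Fn n)) :=
  SemidirectProduct (Fn n) (Multiplicative ℤ) (zpowersHom (MulAut (Fn n)) Φ)

/-- `ψgrp n Φ : F₂ → Aut(F_n)` sends both free generators `u` and `v` to `Φ`. -/
def ψgrp (n : ℕ) (Φ : MulAut (Fn n)) : F2 →* MulAut (Fn n) :=
  FreeGroup.lift fun _ => Φ

/-- `σ2 : F₂ → ℤ` sends both free generators `u` and `v` to `1`. -/
def σ2 : F2 →* Multiplicative ℤ :=
  FreeGroup.lift fun _ => Multiplicative.ofAdd (1 : ℤ)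

/-- The endomorphism `ι` of `F₂` inverting both free generators. -/
def invGens : F2 →* F2 :=
  FreeGroup.lift fun i => (FreeGroup.of i)⁻¹

lemma invGens_invGens (g : F2) : invGens (invGens g) = g := by
  have h : invGens.comp invGens = MonoidHom.id F2 := by
    ext i
    simp [invGens]
  exact DFunLike.congr_fun h g

lemma σ2_invGens (g : F2) : σ2 (invGens g) = (σ2 g)⁻¹ := by
  have h : σ2.comp invGens = σ2⁻¹ := by
    ext i
    simp [invGens, σ2]
  exact DFunLike.congr_fun h g

/-- The action `ψ` factors through `σ`: it is `g ↦ Φ ^ σ(g)`. -/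
lemma ψgrp_eq_zpowersHom_σ2 (n : ℕ) (Φ : MulAut (Fn n)) (g : F2) :
    ψgrp n Φ g = zpowersHom (MulAut (Fn n)) Φ (σ2 g) := by
  have h : ψgrp n Φ = (zpowersHom (MulAut (Fn n)) Φ).comp σ2 := by
    apply FreeGroup.ext_hom
    intro i
    simp [ψgrp, σ2]
  exact DFunLike.congr_fun h g

theorem kernel_hQ_iso_semidirect (n : ℕ) (hn : 1 ≤ n) (Φ : MulAut (Fn n))
    (hQ : Bgrp n Φ × F2 →* Multiplicative ℤ)
    (hhQ : ∀ x : Bgrp n Φ × F2, hQ x = x.1.right * σ2 x.2) :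
    Nonempty (hQ.ker ≃* SemidirectProduct (Fn n) F2 (ψgrp n Φ)) := by
  have key : ∀ x : hQ.ker, σ2 (invGens x.1.2) = x.1.1.right := by
    intro x
    have hx : x.1.1.right * σ2 x.1.2 = 1 := (hhQ x.1).symm.trans x.2
    rw [σ2_invGens]
    exact (eq_inv_of_mul_eq_one_left hx).symm
  exact ⟨
    { toFun := fun x => ⟨x.1.1.left, invGens x.1.2⟩
      invFun := fun y => ⟨(⟨y.left, σ2 y.right⟩, invGens y.right), by
        rw [MonoidHom.mem_ker, hhQ, σ2_invGens]
        exact mul_inv_cancel _⟩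
      left_inv := fun x => by
        apply Subtype.ext
        apply Prod.ext
        · exact SemidirectProduct.ext rfl (key x)
        · exact invGens_invGens _
      right_inv := fun y => SemidirectProduct.ext rfl (invGens_invGens _)
      map_mul' := fun x y => by
        apply SemidirectProduct.ext
        · change x.1.1.left * zpowersHom _ Φ x.1.1.right y.1.1.left =
            x.1.1.left * ψgrp n Φ (invGens x.1.2) y.1.1.left
          rw [ψgrp_eq_zpowersHom_σ2, key]
        · exact map_mul invGens _ _ }⟩
end

section
/- Let n ≥ 1, let Φ be an automorphism of the free group F_n, and let B = F_n ⋊_Φ ℤ. The double D = B ∗_{F_n} B, i.e., the amalgamated free product (pushout) of two copies of B along the canonical inclusions F_n ↪ B, w ↦ (w, 0), is isomorphic as a group to the semidirect product F_n ⋊_ψ F₂, where F₂ is the free group on two generators and ψ : F₂ → Aut(F_n) sends both free generators to Φ. -/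
/-- The double `D = B ∗_{F_n} B`: the pushout of two copies of `B` along the
canonical inclusions `F_n ↪ B`, `w ↦ (w, 0)`. -/
abbrev Dbl (n : ℕ) (Φ : MulAut (Fn n)) :=
  Monoid.PushoutI (fun _ : Fin 2 => (SemidirectProduct.inl : Fn n →* Bgrp n Φ))

open Monoid

/-- The map `B ∗_{F_n} B → F_n ⋊_ψ F₂` that is the identity on `F_n` and sends the stable letter of
the `i`-th copy of `B` to the `i`-th generator of `F₂`. -/
def toSemi (n : ℕ) (Φ : MulAut (Fn n)) : Dbl n Φ →* SemidirectProduct (Fn n) F2 (ψgrp n Φ) :=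
  PushoutI.lift
    (fun i => SemidirectProduct.map (MonoidHom.id _) (zpowersHom F2 (FreeGroup.of i)) (by
      intro g
      ext w : 1
      simp [zpowersHom_apply, ψgrp]))
    SemidirectProduct.inl
    (fun i => by rw [SemidirectProduct.map_comp_inl, MonoidHom.comp_id])

/-- The homomorphism `F₂ → B ∗_{F_n} B` sending the `i`-th generator to the stable letter of the
`i`-th copy of `B`. -/
def stable (n : ℕ) (Φ : MulAut (Fn n)) : F2 →* Dbl n Φ :=
  FreeGroup.lift fun i => PushoutI.of i (SemidirectProduct.inr (Multiplicative.ofAdd 1))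

theorem stable_of (n : ℕ) (Φ : MulAut (Fn n)) (i : Fin 2) :
    stable n Φ (FreeGroup.of i) =
      PushoutI.of i (SemidirectProduct.inr (Multiplicative.ofAdd 1)) := by
  simp [stable]

theorem base_ψgrp_of (n : ℕ) (Φ : MulAut (Fn n)) (i : Fin 2) (w : Fn n) :
    (PushoutI.base _ (ψgrp n Φ (FreeGroup.of i) w) : Dbl n Φ) =
      stable n Φ (FreeGroup.of i) * PushoutI.base _ w * (stable n Φ (FreeGroup.of i))⁻¹ := by
  have h := SemidirectProduct.inl_aut (φ := zpowersHom (MulAut (Fn n)) Φ)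
    (Multiplicative.ofAdd 1) w
  rw [stable_of, ← PushoutI.of_apply_eq_base _ i, ← PushoutI.of_apply_eq_base _ i, ← map_inv,
    ← map_mul, ← map_mul, ← map_inv, ← h]
  simp [zpowersHom_apply, ψgrp]

/-- Inside the double, conjugation by `stable g` acts on `F_n` as `ψ g`. -/
theorem base_ψgrp (n : ℕ) (Φ : MulAut (Fn n)) (g : F2) : ∀ w : Fn n,
    (PushoutI.base _ (ψgrp n Φ g w) : Dbl n Φ) =
      stable n Φ g * PushoutI.base _ w * (stable n Φ g)⁻¹ := by
  induction g using FreeGroup.induction_on with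
  | C1 => simp
  | of i => exact base_ψgrp_of n Φ i
  | inv_of i ih =>
    intro w
    have h := ih ((ψgrp n Φ (FreeGroup.of i))⁻¹ w)
    rw [MulAut.apply_inv_self] at h
    rw [map_inv, map_inv, h]
    group
  | mul x y hx hy =>
    intro w
    rw [map_mul, MulAut.mul_apply, hx, hy, map_mul]
    group

/-- The map `F_n ⋊_ψ F₂ → B ∗_{F_n} B` that is the identity on `F_n` and `stable` on `F₂`. -/
def toDbl (n : ℕ) (Φ : MulAut (Fn n)) : SemidirectProduct (Fn n) F2 (ψgrp n Φ) →* Dbl n Φ :=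
  SemidirectProduct.lift (PushoutI.base _) (stable n Φ) (fun g =>
    MonoidHom.ext fun w => base_ψgrp n Φ g w)

theorem toDbl_comp_toSemi (n : ℕ) (Φ : MulAut (Fn n)) :
    (toDbl n Φ).comp (toSemi n Φ) = MonoidHom.id _ := by
  refine PushoutI.hom_ext_nonempty fun i => SemidirectProduct.hom_ext ?_ ?_
  · refine MonoidHom.ext fun w => ?_
    simp [toDbl, toSemi, PushoutI.of_apply_eq_base (fun _ : Fin 2 =>
      (SemidirectProduct.inl : Fn n →* Bgrp n Φ))]
  · refine MonoidHom.ext_mint ?_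
    simp [toDbl, toSemi, zpowersHom_apply, stable_of]

theorem toSemi_comp_toDbl (n : ℕ) (Φ : MulAut (Fn n)) :
    (toSemi n Φ).comp (toDbl n Φ) = MonoidHom.id _ := by
  refine SemidirectProduct.hom_ext ?_ ?_
  · refine MonoidHom.ext fun w => ?_
    simp [toDbl, toSemi]
  · refine FreeGroup.ext_hom _ _ fun i => ?_
    simp [toDbl, toSemi, zpowersHom_apply, stable_of]

theorem double_iso_semidirect (n : ℕ) (hn : 1 ≤ n) (Φ : MulAut (Fn n)) :
    Nonempty (Dbl n Φ ≃* SemidirectProduct (Fn n) F2 (ψgrp n Φ)) := by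
  exact ⟨MonoidHom.toMulEquiv _ _ (toDbl_comp_toSemi n Φ) (toSemi_comp_toDbl n Φ)⟩
end

section
/- Let n ≥ 1, let Φ be an automorphism of the free group F_n, let B = F_n ⋊_Φ ℤ, and let F₂ be the free group on generators u, v. There is an injective group homomorphism from the double D = B ∗_{F_n} B into B × F₂, determined by sending an element (w,k) of the first copy of B to ((w,k), u^{-k}) and an element (w,k) of the second copy of B to ((w,k), v^{-k}), and its image is exactly the kernel of the homomorphism h_Q : B × F₂ → ℤ given by h_Q((w,k), g) = k + σ(g), where σ(u) = σ(v) = 1. -/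
namespace Dbl

variable {n : ℕ} {Φ : MulAut (Fn n)}

/-- The endomorphism of `F₂` sending each of the two generators to its inverse. -/
def invGen : F2 →* F2 := FreeGroup.lift fun i => (FreeGroup.of i)⁻¹

theorem invGen_invGen (g : F2) : invGen (invGen g) = g := by
  have h : invGen.comp invGen = MonoidHom.id F2 := by
    ext i; simp [invGen]
  exact DFunLike.congr_fun h g

theorem σ2_invGen (g : F2) : σ2 (invGen g) = (σ2 g)⁻¹ := by
  have h : σ2.comp invGen = σ2⁻¹ := by
    ext i; simp [invGen, σ2]
  exact DFunLike.congr_fun h g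

/-- The action of `F₂` on `F_n` in which `g` acts as `Φ ^ σ(g)`. -/
def act (Φ : MulAut (Fn n)) : F2 →* MulAut (Fn n) :=
  (zpowersHom (MulAut (Fn n)) Φ).comp σ2

/-- The stable letter `(1, 1)` of `B = F_n ⋊ ℤ`. -/
def stable (Φ : MulAut (Fn n)) : Bgrp n Φ :=
  SemidirectProduct.inr (Multiplicative.ofAdd (1 : ℤ))

/-- The homomorphism from `F₂` to the double sending the `i`-th generator to the stable letter
of the `i`-th copy of `B`. -/
def letters (Φ : MulAut (Fn n)) : F2 →* Dbl n Φ :=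
  FreeGroup.lift fun i => Monoid.PushoutI.of i (stable Φ)

/-- The relation of `F_n ⋊ F₂` holds in the double, which is what makes `fromSplit` a
homomorphism: on a generator of `F₂` it is the relation of `B` in one of the two copies. -/
theorem base_act (g : F2) (w : Fn n) :
    Monoid.PushoutI.base (fun _ : Fin 2 => (SemidirectProduct.inl : Fn n →* Bgrp n Φ))
        (act Φ g w) =
      letters Φ g * Monoid.PushoutI.base _ w * (letters Φ g)⁻¹ := by
  have key : ∀ (i : Fin 2) (w : Fn n),
      Monoid.PushoutI.base (fun _ : Fin 2 => (SemidirectProduct.inl : Fn n →* Bgrp n Φ))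
        (act Φ (FreeGroup.of i) w) =
      letters Φ (FreeGroup.of i) * Monoid.PushoutI.base _ w *
        (letters Φ (FreeGroup.of i))⁻¹ := by
    intro i w
    rw [← Monoid.PushoutI.of_apply_eq_base _ i, ← Monoid.PushoutI.of_apply_eq_base _ i]
    simp only [letters, FreeGroup.lift_apply_of, ← map_mul, ← map_inv]
    congr 1
    simp only [act, σ2, stable, MonoidHom.comp_apply, FreeGroup.lift_apply_of]
    rw [SemidirectProduct.inl_aut, map_inv]
  induction g using FreeGroup.induction_on generalizing w with
  | C1 => simp
  | of i => exact key i w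
  | inv_of i _ =>
    have h := key i ((act Φ (FreeGroup.of i))⁻¹ w)
    rw [MulAut.apply_inv_self] at h
    rw [map_inv, map_inv, h]
    group
  | mul x y hx hy =>
    rw [map_mul, MulAut.mul_apply, hx, hy, map_mul]
    group

/-- The homomorphism `F_n ⋊ F₂ → D` given by `(w, g) ↦ w · g(t₀, t₁)`, where `tᵢ` is the stable
letter of the `i`-th copy of `B`. -/
def fromSplit (Φ : MulAut (Fn n)) : SemidirectProduct (Fn n) F2 (act Φ) →* Dbl n Φ :=
  SemidirectProduct.lift (Monoid.PushoutI.base _) (letters Φ) fun g => by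
    ext1 i
    exact base_act g _

theorem fromSplit_surjective : Function.Surjective (fromSplit Φ) := by
  intro d
  induction d using Monoid.PushoutI.induction_on with
  | of i b =>
    refine ⟨SemidirectProduct.inl b.left *
      SemidirectProduct.inr (FreeGroup.of i ^ Multiplicative.toAdd b.right), ?_⟩
    simp only [fromSplit, map_mul, SemidirectProduct.lift_inl, SemidirectProduct.lift_inr,
      map_zpow, letters, FreeGroup.lift_apply_of]
    rw [← Monoid.PushoutI.of_apply_eq_base _ i, ← map_zpow, ← map_mul, stable, ← map_zpow]
    congr 1
    rw [← ofAdd_zsmul]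
    simp
  | base h => exact ⟨SemidirectProduct.inl h, by simp [fromSplit]⟩
  | mul x y hx hy =>
    obtain ⟨a, rfl⟩ := hx
    obtain ⟨b, rfl⟩ := hy
    exact ⟨a * b, map_mul _ _ _⟩

/-- The homomorphism `B → B × F₂`, `b = (w, k) ↦ (b, gᵢ ^ (-k))`, on the `i`-th copy of `B`. -/
def factorMap (Φ : MulAut (Fn n)) (i : Fin 2) : Bgrp n Φ →* Bgrp n Φ × F2 :=
  (MonoidHom.id _).prod
    ((zpowersHom F2 (FreeGroup.of i)⁻¹).comp SemidirectProduct.rightHom)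

/-- The homomorphism `D → B × F₂` induced by the two maps `factorMap Φ i`, which agree on
`F_n`. -/
def toProd (Φ : MulAut (Fn n)) : Dbl n Φ →* Bgrp n Φ × F2 :=
  Monoid.PushoutI.lift (factorMap Φ) ((MonoidHom.inl _ _).comp SemidirectProduct.inl) fun i => by
    ext1 j
    simp [factorMap]

theorem toProd_of (i : Fin 2) (b : Bgrp n Φ) :
    toProd Φ (Monoid.PushoutI.of i b) =
      (b, FreeGroup.of i ^ (-(Multiplicative.toAdd b.right))) := by
  simp [toProd, factorMap, zpowersHom_apply]

/-- In the coordinates of `F_n ⋊ F₂` the homomorphism `toProd` is explicit, so its injectivity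
and its image can be read off. -/
theorem toProd_fromSplit (x : SemidirectProduct (Fn n) F2 (act Φ)) :
    toProd Φ (fromSplit Φ x) = (⟨x.left, σ2 x.right⟩, invGen x.right) := by
  have hr : ∀ g : F2, toProd Φ (letters Φ g) = (SemidirectProduct.inr (σ2 g), invGen g) := by
    intro g
    have h : (toProd Φ).comp (letters Φ) =
        ((SemidirectProduct.inr : _ →* Bgrp n Φ).comp σ2).prod invGen := by
      ext1 i
      simp only [MonoidHom.comp_apply, letters, FreeGroup.lift_apply_of, toProd_of]
      simp [stable, σ2, invGen]
    exact DFunLike.congr_fun h g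
  conv_lhs => rw [← SemidirectProduct.inl_left_mul_inr_right x]
  simp only [fromSplit, map_mul, SemidirectProduct.lift_inl, SemidirectProduct.lift_inr, hr]
  simp [toProd, SemidirectProduct.mk_eq_inl_mul_inr]

end Dbl

/-- There is an injective homomorphism `D = B ∗_{F_n} B → B × F₂` sending `(w,k)` in the
`i`-th copy of `B` to `((w,k), gᵢ^{-k})` (where `g₀ = u`, `g₁ = v`), whose image is exactly
the kernel of `h_Q : B × F₂ → ℤ`, `h_Q((w,k),g) = k + σ(g)`. -/
theorem double_embeds_as_kernel (n : ℕ) (hn : 1 ≤ n) (Φ : MulAut (Fn n))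
    (hQ : Bgrp n Φ × F2 →* Multiplicative ℤ)
    (hhQ : ∀ x : Bgrp n Φ × F2, hQ x = x.1.right * σ2 x.2) :
    ∃ θ : Dbl n Φ →* Bgrp n Φ × F2,
      (∀ (i : Fin 2) (b : Bgrp n Φ),
        θ (Monoid.PushoutI.of i b) =
          (b, FreeGroup.of i ^ (-(Multiplicative.toAdd b.right)))) ∧
      Function.Injective θ ∧ θ.range = hQ.ker := by
  refine ⟨Dbl.toProd Φ, Dbl.toProd_of, ?_, ?_⟩
  · rw [injective_iff_map_eq_one]
    intro d hd
    obtain ⟨x, rfl⟩ := Dbl.fromSplit_surjective d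
    rw [Dbl.toProd_fromSplit, Prod.ext_iff, SemidirectProduct.ext_iff] at hd
    obtain ⟨⟨hl, -⟩, hg⟩ := hd
    have hx : x.right = 1 := by
      rw [← Dbl.invGen_invGen x.right]
      exact (congrArg Dbl.invGen hg).trans (map_one _)
    rw [show x = 1 from SemidirectProduct.ext hl hx, map_one]
  · ext p
    rw [MonoidHom.mem_ker, hhQ]
    constructor
    · rintro ⟨d, rfl⟩
      obtain ⟨x, rfl⟩ := Dbl.fromSplit_surjective d
      simp [Dbl.toProd_fromSplit, Dbl.σ2_invGen]
    · intro hp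
      -- `(w, α(g))` is the preimage of `((w, k), g)`, since `k = -σ(g) = σ(α(g))`.
      refine ⟨Dbl.fromSplit Φ ⟨p.1.left, Dbl.invGen p.2⟩, ?_⟩
      rw [Dbl.toProd_fromSplit]
      refine Prod.ext (SemidirectProduct.ext rfl ?_) (Dbl.invGen_invGen p.2)
      exact (Dbl.σ2_invGen p.2).trans (eq_inv_of_mul_eq_one_left hp).symm
end
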